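/- Assume the hypotheses of the Weierstrass canonical form and the vanishing-moment condition, with z_j ∉ {λ_1,…,λ_r} for all j; let V, Ṽ ∈ ℂ^{n×L}, define Ŝ_k := Σ_{j=1}^N ω_j z_j^k (z_j B − A)^{-1} B V, μ̂_k := Ṽ^H Ŝ_k, and η := max{n_i : r+1 ≤ i ≤ d} (η := 1 if r = d). Suppose M ≥ 1 satisfies 2M − 1 ≤ N − η. Let Ĥ_M ∈ ℂ^{LM×LM} be the block Hankel matrix whose (i,j) block is μ̂_{i+j−2} and Ĥ_M^< the block Hankel matrix whose (i,j) block is μ̂_{i+j−1} (i,j = 1,…,M). Set Ŝ := [Ŝ_0, Ŝ_1, …, Ŝ_{M−1}] ∈ ℂ^{n×LM} and S̃ := [Ṽ, C^H Ṽ, …, (C^H)^{M−1} Ṽ] ∈ ℂ^{n×LM}. Then Ĥ_M = S̃^H Ŝ and Ĥ_M^< = S̃^H C Ŝ. -/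

import Mathlib

noncomputable section
open Matrix

/-- The `n×n` Jordan block with eigenvalue `l`: diagonal entries `l`,
superdiagonal entries `1`, all other entries `0`. -/
def jordanBlock (n : ℕ) (l : ℂ) : Matrix (Fin n) (Fin n) ℂ :=
  Matrix.of fun p q : Fin n =>
    if (q : ℕ) = (p : ℕ) then l else if (q : ℕ) = (p : ℕ) + 1 then 1 else 0

/-- `C := Q_{1:r} J_{1:r} Q̃_{1:r}ᴴ`, where `Q_{1:r}` consists of the columns of `Q`
belonging to the first `r` (Jordan) blocks, `Q̃_{1:r}ᴴ` of the corresponding rows of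
`Q⁻¹`, and `J_{1:r} = J_{n_1}(λ_1) ⊕ ⋯ ⊕ J_{n_r}(λ_r)`. -/
def Cmat (d : ℕ) (ni : Fin d → ℕ) (r : ℕ) (lam : Fin d → ℂ)
    (Q : Matrix ((i : Fin d) × Fin (ni i)) ((i : Fin d) × Fin (ni i)) ℂ) :
    Matrix ((i : Fin d) × Fin (ni i)) ((i : Fin d) × Fin (ni i)) ℂ :=
  Q.submatrix id (Subtype.val : {x : (i : Fin d) × Fin (ni i) // (x.1 : ℕ) < r} → _) *
    (Matrix.blockDiagonal' (fun i => jordanBlock (ni i) (lam i))).submatrix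
      (Subtype.val : {x : (i : Fin d) × Fin (ni i) // (x.1 : ℕ) < r} → _) Subtype.val *
    (Q⁻¹).submatrix (Subtype.val : {x : (i : Fin d) × Fin (ni i) // (x.1 : ℕ) < r} → _) id

/-- `Ŝ_k := ∑_j ω_j z_j^k (z_j B − A)⁻¹ B V`. -/
def Shat {n : Type*} [Fintype n] [DecidableEq n] {L N : ℕ}
    (z omega : Fin N → ℂ) (A B : Matrix n n ℂ) (V : Matrix n (Fin L) ℂ) (k : ℕ) :
    Matrix n (Fin L) ℂ :=
  ∑ j, (omega j * z j ^ k) • ((z j • B - A)⁻¹ * B * V)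

/-- `Ŝ := [Ŝ_0, Ŝ_1, …, Ŝ_{M−1}]`, an `n × LM` matrix whose `(j,t)` block column
entry is the `(·,t)` entry of `Ŝ_j`. -/
def ShatBig {n : Type*} [Fintype n] [DecidableEq n] {L N : ℕ}
    (z omega : Fin N → ℂ) (A B : Matrix n n ℂ) (V : Matrix n (Fin L) ℂ) (M : ℕ) :
    Matrix n (Fin M × Fin L) ℂ :=
  Matrix.of fun x jt => Shat z omega A B V (jt.1 : ℕ) x jt.2

/-- `S̃ := [Ṽ, CᴴṼ, …, (Cᴴ)^{M−1}Ṽ]`. -/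
def StildeBig {n : Type*} [Fintype n] [DecidableEq n] {L : ℕ}
    (C : Matrix n n ℂ) (Vt : Matrix n (Fin L) ℂ) (M : ℕ) :
    Matrix n (Fin M × Fin L) ℂ :=
  Matrix.of fun x is => ((Cᴴ) ^ (is.1 : ℕ) * Vt) x is.2

/-!
Up to equivalence the pencil `z B - A` is `z - C` on the range of an idempotent `E` and `z T - 1`
on the complement, with `T ^ e = 0`. Hence `G z := (z B - A)⁻¹ B` satisfies
`(z - C) (E G z) = E` and `z ((1 - E) G z) = 1 - (1 - z T)⁻¹ = 1 - ∑_{p < e} (z T)^p`, so that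
`z G z - C G z` is a polynomial in `z` of degree less than `e`. The vanishing moments of the
quadrature rule annihilate `z ^ k` times this polynomial, which gives `Ŝ_{k+1} = C Ŝ_k` for
`k + 1 + e ≤ N`; the two Hankel factorizations are the blockwise identity `Ŝ_{i+j} = C ^ i Ŝ_j`.
-/

section PencilSplitting

variable {K R R' : Type*} [CommRing K] [Ring R] [Ring R'] [Algebra K R]

/-- A splitting of the pencil `z B - A` into a finite part `C` and a nilpotent part: up to the left
unit factor `unit`, the pencil is `z - C` on the range of the idempotent `proj` and `z nil - 1` on
that of `1 - proj`. This is the Weierstrass canonical form without a choice of basis; `e` bounds the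
index of nilpotency of `nil`, and is taken positive so that a pencil without nilpotent part has
index `1`. -/
structure PencilSplitting (A B C : R) (e : ℕ) where
  unit : Rˣ
  proj : R
  nil : R
  left_eq : A = unit * (C + (1 - proj))
  right_eq : B = unit * (proj + nil)
  proj_mul_proj : proj * proj = proj
  proj_mul_finite : proj * C = C
  proj_mul_nil : proj * nil = 0
  nil_mul_proj : nil * proj = 0
  nil_pow : nil ^ e = 0
  index_pos : 1 ≤ e

theorem isUnit_smul_sub_of_equivalent {A B A' B' : R} (P Q : Rˣ) (hA : P * A * Q = A')
    (hB : P * B * Q = B') {z : K} (h : IsUnit (z • B' - A')) : IsUnit (z • B - A) := by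
  have hpencil : P * (z • B - A) * Q = z • B' - A' := by
    rw [mul_sub, sub_mul, mul_smul_comm, smul_mul_assoc, hA, hB]
  rwa [← hpencil, Units.isUnit_mul_units, Units.isUnit_units_mul] at h

theorem eq_one_sub_geom_sum {x y : R} {e : ℕ} (hy : y ^ e = 0) (hx : (1 - y) * x = -y) :
    x = 1 - ∑ p ∈ Finset.range e, y ^ p := by
  have hinv : (∑ p ∈ Finset.range e, y ^ p) * (1 - y) = 1 := by
    rw [geom_sum_mul_neg, hy, sub_zero]
  calc x = (∑ p ∈ Finset.range e, y ^ p) * ((1 - y) * x) := by rw [← mul_assoc, hinv, one_mul]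
    _ = (∑ p ∈ Finset.range e, y ^ p) * (1 - y) - ∑ p ∈ Finset.range e, y ^ p := by
        rw [hx]; noncomm_ring
    _ = 1 - ∑ p ∈ Finset.range e, y ^ p := by rw [hinv]

theorem sum_smul_sum_range_pow_smul_eq_zero {X : Type*} [AddCommMonoid X] [Module K X] {N : ℕ}
    {z ω : Fin N → K} (hω : ∀ k, k + 2 ≤ N → ∑ j, ω j * z j ^ k = 0) (a : ℕ → X) {k e : ℕ}
    (hk : k + e + 1 ≤ N) :
    ∑ j, (ω j * z j ^ k) • ∑ p ∈ Finset.range e, z j ^ p • a p = 0 := by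
  simp only [Finset.smul_sum, smul_smul, mul_assoc, ← pow_add]
  rw [Finset.sum_comm]
  refine Finset.sum_eq_zero fun p hp => ?_
  have hpe := Finset.mem_range.mp hp
  rw [← Finset.sum_smul, hω (k + p) (by omega), zero_smul]

namespace PencilSplitting

/-- The image of a splitting under a ring homomorphism. -/
def map {A B C : R} {e : ℕ} (s : PencilSplitting A B C e) (f : R →+* R') :
    PencilSplitting (f A) (f B) (f C) e where
  unit := Units.map f s.unit
  proj := f s.proj
  nil := f s.nil
  left_eq := by simpa using congrArg f s.left_eq
  right_eq := by simpa using congrArg f s.right_eq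
  proj_mul_proj := by rw [← map_mul, s.proj_mul_proj]
  proj_mul_finite := by rw [← map_mul, s.proj_mul_finite]
  proj_mul_nil := by rw [← map_mul, s.proj_mul_nil, map_zero]
  nil_mul_proj := by rw [← map_mul, s.nil_mul_proj, map_zero]
  nil_pow := by rw [← map_pow, s.nil_pow, map_zero]
  index_pos := s.index_pos

/-- The splitting of a pencil `(A, B)` obtained from one of an equivalent pencil
`(P A Q, P B Q)`. -/
def ofEquivalent {A B C A' B' C' : R} {e : ℕ} (s : PencilSplitting A' B' C' e) (P Q : Rˣ)
    (hA : P * A * Q = A') (hB : P * B * Q = B') (hC : C = Q * C' * ↑Q⁻¹) :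
    PencilSplitting A B C e where
  unit := P⁻¹ * s.unit * Q⁻¹
  proj := Q * s.proj * ↑Q⁻¹
  nil := Q * s.nil * ↑Q⁻¹
  left_eq := by
    calc A = ↑P⁻¹ * A' * ↑Q⁻¹ := by simp [← hA, mul_assoc]
      _ = ↑P⁻¹ * (s.unit * (C' + (1 - s.proj))) * ↑Q⁻¹ := by rw [← s.left_eq]
      _ = _ := by simp [hC, mul_assoc, mul_add, add_mul, mul_sub, sub_mul]
  right_eq := by
    calc B = ↑P⁻¹ * B' * ↑Q⁻¹ := by simp [← hB, mul_assoc]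
      _ = ↑P⁻¹ * (s.unit * (s.proj + s.nil)) * ↑Q⁻¹ := by rw [← s.right_eq]
      _ = _ := by simp [mul_assoc, mul_add, add_mul]
  proj_mul_proj := by simp [mul_assoc, ← mul_assoc s.proj s.proj, s.proj_mul_proj]
  proj_mul_finite := by simp [hC, mul_assoc, ← mul_assoc s.proj C', s.proj_mul_finite]
  proj_mul_nil := by simp [mul_assoc, ← mul_assoc s.proj s.nil, s.proj_mul_nil]
  nil_mul_proj := by simp [mul_assoc, ← mul_assoc s.nil s.proj, s.nil_mul_proj]
  nil_pow := by rw [Units.conj_pow, s.nil_pow, mul_zero, zero_mul]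
  index_pos := s.index_pos

/-- The splitting of a family of pencils each of which is either `z - J i` or `z N i - 1` with
`N i` nilpotent. -/
def ofCanonicalBlocks {ι : Type*} {R : ι → Type*} [∀ i, Ring (R i)] (p : ι → Prop)
    [DecidablePred p] (J N : ∀ i, R i) {e : ℕ} (he : 1 ≤ e) (hN : ∀ i, ¬ p i → N i ^ e = 0) :
    PencilSplitting (fun i => if p i then J i else 1) (fun i => if p i then 1 else N i)
      (fun i => if p i then J i else 0) e where
  unit := 1
  proj i := if p i then 1 else 0
  nil i := if p i then 0 else N i
  left_eq := by ext i; by_cases hi : p i <;> simp [hi]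
  right_eq := by ext i; by_cases hi : p i <;> simp [hi]
  proj_mul_proj := by ext i; by_cases hi : p i <;> simp [hi]
  proj_mul_finite := by ext i; by_cases hi : p i <;> simp [hi]
  proj_mul_nil := by ext i; by_cases hi : p i <;> simp [hi]
  nil_mul_proj := by ext i; by_cases hi : p i <;> simp [hi]
  nil_pow := by ext i; by_cases hi : p i <;> simp [hi, hN, Nat.one_le_iff_ne_zero.mp he]
  index_pos := he

theorem smul_sub_mul_eq_add_geom_sum {A B C G : R} {e : ℕ} (s : PencilSplitting A B C e) {z : K}
    (hG : (z • B - A) * G = B) :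
    z • G - C * G = s.proj + (1 - ∑ p ∈ Finset.range e, (z • s.nil) ^ p) := by
  obtain ⟨S, E, T, rfl, rfl, hEE, hEC, hET, hTE, hT, -⟩ := s
  have hpencil : (z • (E + T) - (C + (1 - E))) * G = E + T := by
    rw [← mul_smul_comm, ← mul_sub, mul_assoc] at hG
    exact S.isUnit.mul_left_cancel hG
  have hfinite : z • (E * G) - C * G = E := by
    have h := congrArg (E * ·) hpencil
    simpa [← mul_assoc, mul_sub, mul_add, hEE, hEC, hET, sub_mul] using h
  have hinfinite : z • (T * G) - (1 - E) * G = T := by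
    simp only [sub_mul, add_mul, smul_mul_assoc, one_mul] at hpencil ⊢
    linear_combination (norm := module) hpencil - hfinite
  have hcomplement : (1 - z • T) * (z • ((1 - E) * G)) = -(z • T) := by
    have hTF : T * ((1 - E) * G) = T * G := by rw [← mul_assoc, mul_sub, hTE, mul_one, sub_zero]
    simp only [sub_mul (1 : R) (z • T), one_mul, smul_mul_assoc, mul_smul_comm, hTF]
    rw [← smul_sub, ← smul_neg, ← neg_sub (z • (T * G)), hinfinite]
  have hnil : (z • T) ^ e = 0 := by rw [smul_pow, hT, smul_zero]
  calc z • G - C * G = (z • (E * G) - C * G) + z • ((1 - E) * G) := by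
        rw [sub_mul, one_mul]; module
    _ = E + (1 - ∑ p ∈ Finset.range e, (z • T) ^ p) := by
        rw [hfinite, eq_one_sub_geom_sum hnil hcomplement]

theorem exists_smul_sub_mul_eq_sum_range {A B C : R} {e : ℕ} (s : PencilSplitting A B C e) :
    ∃ a : ℕ → R, ∀ (z : K) (G : R), (z • B - A) * G = B →
      z • G - C * G = ∑ p ∈ Finset.range e, z ^ p • a p := by
  refine ⟨fun p => (if p = 0 then s.proj + 1 else 0) - s.nil ^ p, fun z G hG => ?_⟩
  have hconst : ∑ p ∈ Finset.range e, z ^ p • (if p = 0 then s.proj + 1 else 0) = s.proj + 1 := by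
    simp [smul_ite, Nat.pos_iff_ne_zero.mp s.index_pos]
  simp only [smul_sub, Finset.sum_sub_distrib, hconst, ← smul_pow,
    s.smul_sub_mul_eq_add_geom_sum hG, add_sub_assoc]

theorem sum_mul_pow_succ_smul {A B C : R} {e : ℕ} (s : PencilSplitting A B C e) {N : ℕ}
    {z ω : Fin N → K} (hω : ∀ k, k + 2 ≤ N → ∑ j, ω j * z j ^ k = 0) {G : Fin N → R}
    (hG : ∀ j, (z j • B - A) * G j = B) {k : ℕ} (hk : k + 1 + e ≤ N) :
    ∑ j, (ω j * z j ^ (k + 1)) • G j = C * ∑ j, (ω j * z j ^ k) • G j := by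
  obtain ⟨a, ha⟩ := s.exists_smul_sub_mul_eq_sum_range (K := K)
  rw [← sub_eq_zero]
  calc ∑ j, (ω j * z j ^ (k + 1)) • G j - C * ∑ j, (ω j * z j ^ k) • G j
      = ∑ j, (ω j * z j ^ k) • (z j • G j - C * G j) := by
        simp only [Finset.mul_sum, ← Finset.sum_sub_distrib, smul_sub, smul_smul, mul_smul_comm,
          pow_succ, mul_assoc]
    _ = ∑ j, (ω j * z j ^ k) • ∑ p ∈ Finset.range e, z j ^ p • a p := by
        simp only [ha _ _ (hG _)]
    _ = 0 := sum_smul_sum_range_pow_smul_eq_zero hω a (by omega)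

end PencilSplitting

end PencilSplitting

section BlockMatrices

variable {n : Type*} {L L' M M' : ℕ}

/-- The block Hankel matrix with `M' × M` blocks whose `(i, j)` block, counted from `0`, is
`m (i + j)`. -/
def blockHankel (M' M : ℕ) (m : ℕ → Matrix (Fin L') (Fin L) ℂ) :
    Matrix (Fin M' × Fin L') (Fin M × Fin L) ℂ :=
  Matrix.of fun is jt => m (is.1 + jt.1) is.2 jt.2

/-- The block row `[W 0, …, W (M - 1)]`, the common shape of `ShatBig` and `StildeBig`. -/
def blockRow (M : ℕ) (W : ℕ → Matrix n (Fin L) ℂ) : Matrix n (Fin M × Fin L) ℂ :=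
  Matrix.of fun x jt => W jt.1 x jt.2

variable [Fintype n]

theorem mul_blockRow (C : Matrix n n ℂ) (W : ℕ → Matrix n (Fin L) ℂ) :
    C * blockRow M W = blockRow M fun j => C * W j :=
  rfl

theorem conjTranspose_blockRow_mul_blockRow_apply (U : ℕ → Matrix n (Fin L') ℂ)
    (W : ℕ → Matrix n (Fin L) ℂ) (is : Fin M' × Fin L') (jt : Fin M × Fin L) :
    ((blockRow M' U)ᴴ * blockRow M W) is jt = ((U is.1)ᴴ * W jt.1) is.2 jt.2 :=
  rfl

theorem blockHankel_eq_conjTranspose_StildeBig_mul [DecidableEq n] {C : Matrix n n ℂ}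
    {S W : ℕ → Matrix n (Fin L) ℂ}
    (hS : ∀ i < M', ∀ j < M, S (i + j) = C ^ i * W j) (Vt : Matrix n (Fin L') ℂ) :
    blockHankel M' M (fun k => Vtᴴ * S k) = (StildeBig C Vt M')ᴴ * blockRow M W := by
  ext is jt
  have hStilde : StildeBig C Vt M' = blockRow M' fun i => Cᴴ ^ i * Vt := rfl
  rw [hStilde, conjTranspose_blockRow_mul_blockRow_apply, conjTranspose_mul, conjTranspose_pow,
    conjTranspose_conjTranspose, Matrix.mul_assoc, ← hS is.1 is.1.2 jt.1 jt.1.2]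
  rfl

end BlockMatrices

section Moments

variable {n : Type*} [Fintype n] [DecidableEq n] {L L' M M' N : ℕ} {z ω : Fin N → ℂ}
  {A B C : Matrix n n ℂ} {e : ℕ}

theorem Shat_eq_sum_mul (V : Matrix n (Fin L) ℂ) (k : ℕ) :
    Shat z ω A B V k = (∑ j, (ω j * z j ^ k) • ((z j • B - A)⁻¹ * B)) * V := by
  simp only [Shat, Matrix.sum_mul, Matrix.smul_mul]

theorem Shat_succ (s : PencilSplitting A B C e)
    (hω : ∀ k, k + 2 ≤ N → ∑ j, ω j * z j ^ k = 0) (hreg : ∀ j, IsUnit (z j • B - A))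
    (V : Matrix n (Fin L) ℂ) {k : ℕ} (hk : k + 1 + e ≤ N) :
    Shat z ω A B V (k + 1) = C * Shat z ω A B V k := by
  have hG (j) : (z j • B - A) * ((z j • B - A)⁻¹ * B) = B :=
    mul_nonsing_inv_cancel_left _ _ ((isUnit_iff_isUnit_det _).mp (hreg j))
  rw [Shat_eq_sum_mul, Shat_eq_sum_mul, s.sum_mul_pow_succ_smul hω hG hk, Matrix.mul_assoc]

theorem Shat_add (s : PencilSplitting A B C e)
    (hω : ∀ k, k + 2 ≤ N → ∑ j, ω j * z j ^ k = 0) (hreg : ∀ j, IsUnit (z j • B - A))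
    (V : Matrix n (Fin L) ℂ) (i : ℕ) {k : ℕ} (hk : i + k + e ≤ N) :
    Shat z ω A B V (i + k) = C ^ i * Shat z ω A B V k := by
  induction i with
  | zero => simp
  | succ i ih =>
    rw [Nat.add_right_comm, Shat_succ s hω hreg V (by omega), ih (by omega), ← Matrix.mul_assoc,
      ← pow_succ']

theorem stmt_7_general (s : PencilSplitting A B C e)
    (hω : ∀ k, k + 2 ≤ N → ∑ j, ω j * z j ^ k = 0) (hreg : ∀ j, IsUnit (z j • B - A))
    (V : Matrix n (Fin L) ℂ) (Vt : Matrix n (Fin L') ℂ) (hMN : M' + M - 1 + e ≤ N) :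
    blockHankel M' M (fun k => Vtᴴ * Shat z ω A B V k) =
      (StildeBig C Vt M')ᴴ * ShatBig z ω A B V M ∧
    blockHankel M' M (fun k => Vtᴴ * Shat z ω A B V (k + 1)) =
      (StildeBig C Vt M')ᴴ * (C * ShatBig z ω A B V M) := by
  have hShat : ShatBig z ω A B V M = blockRow M (Shat z ω A B V) := rfl
  rw [hShat, mul_blockRow]
  constructor
  · exact blockHankel_eq_conjTranspose_StildeBig_mul
      (fun i hi j hj => Shat_add s hω hreg V i (by omega)) Vt
  · refine blockHankel_eq_conjTranspose_StildeBig_mul (fun i hi j hj => ?_) Vt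
    rw [add_assoc, Shat_add s hω hreg V i (by omega), Shat_succ s hω hreg V (by omega)]

end Moments

section Weierstrass

theorem blockTriangular_jordanBlock (n : ℕ) (l : ℂ) : (jordanBlock n l).BlockTriangular id := by
  intro p q hqp
  have hqp' : (q : ℕ) < p := hqp
  simp [jordanBlock, hqp'.ne, (hqp'.trans (Nat.lt_succ_self _)).ne]

theorem charpoly_jordanBlock (n : ℕ) (l : ℂ) :
    (jordanBlock n l).charpoly = (Polynomial.X - Polynomial.C l) ^ n := by
  rw [charpoly_of_isUpperTriangular _ (blockTriangular_jordanBlock n l)]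
  simp [jordanBlock]

theorem jordanBlock_zero_pow_eq_zero {n k : ℕ} (h : n ≤ k) : jordanBlock n 0 ^ k = 0 := by
  have hcayley : jordanBlock n 0 ^ n = 0 := by
    simpa [charpoly_jordanBlock] using aeval_self_charpoly (jordanBlock n 0)
  exact pow_eq_zero_of_le h hcayley

theorem isUnit_smul_one_sub_jordanBlock (n : ℕ) {l z : ℂ} (h : z ≠ l) :
    IsUnit (z • 1 - jordanBlock n l) := by
  have hdet := eval_charpoly (jordanBlock n l) z
  rw [charpoly_jordanBlock, Polynomial.eval_pow, Polynomial.eval_sub, Polynomial.eval_X,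
    Polynomial.eval_C, scalar_apply, ← smul_one_eq_diagonal] at hdet
  rw [isUnit_iff_isUnit_det, ← hdet]
  exact (sub_ne_zero.mpr h).isUnit.pow n

theorem isUnit_smul_jordanBlock_zero_sub_one (n : ℕ) (z : ℂ) :
    IsUnit (z • jordanBlock n 0 - 1) :=
  IsNilpotent.isUnit_sub_one ⟨n, by rw [smul_pow, jordanBlock_zero_pow_eq_zero le_rfl, smul_zero]⟩

theorem submatrix_val_mul_submatrix_val {m n o α : Type*} [Fintype n] [NonUnitalNonAssocSemiring α]
    {p : n → Prop} [DecidablePred p] (X : Matrix m n α) (Y : Matrix n o α)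
    (h : ∀ a i b, ¬ p i → X a i * Y i b = 0) :
    (X.submatrix id Subtype.val : Matrix m {i // p i} α) *
      (Y.submatrix Subtype.val id : Matrix {i // p i} o α) = X * Y := by
  ext a b
  have hcompl : ∑ i : {i // ¬ p i}, X a i * Y i b = 0 :=
    Finset.sum_eq_zero fun i _ => h a i b i.2
  rw [mul_apply, mul_apply, ← Fintype.sum_subtype_add_sum_subtype p, hcompl, add_zero]
  rfl

theorem submatrix_val_mul_submatrix_val_mul_submatrix_val {m n o α : Type*} [Fintype n]
    [NonUnitalNonAssocSemiring α] {p : n → Prop} [DecidablePred p] (X : Matrix m n α)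
    (D : Matrix n n α) (Y : Matrix n o α) (hrow : ∀ i j, ¬ p i → D i j = 0)
    (hcol : ∀ i j, ¬ p j → D i j = 0) :
    (X.submatrix id Subtype.val : Matrix m {i // p i} α) *
      (D.submatrix Subtype.val Subtype.val : Matrix {i // p i} {i // p i} α) *
      (Y.submatrix Subtype.val id : Matrix {i // p i} o α) = X * D * Y := by
  have hXD : (X.submatrix id Subtype.val : Matrix m {i // p i} α) * D.submatrix Subtype.val id =
      X * D :=
    submatrix_val_mul_submatrix_val X D fun a i j hi => by rw [hrow i j hi, mul_zero]
  have hXD_col (a i b) (hi : ¬ p i) : (X * D) a i * Y i b = 0 := by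
    rw [mul_apply, Finset.sum_eq_zero fun j _ => by rw [hcol j i hi, mul_zero], zero_mul]
  rw [← submatrix_val_mul_submatrix_val (p := p) (X * D) Y hXD_col, ← hXD]
  rfl

theorem blockDiagonal'_ite_apply {ι R : Type*} [DecidableEq ι] {k : ι → Type*} [Zero R]
    (p : ι → Prop) [DecidablePred p] (J : ∀ i, Matrix (k i) (k i) R) (x y : (i : ι) × k i) :
    blockDiagonal' (fun i => if p i then J i else 0) x y =
      if p x.1 ∧ p y.1 then blockDiagonal' J x y else 0 := by
  obtain ⟨i, a⟩ := x
  obtain ⟨j, b⟩ := y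
  by_cases hij : i = j
  · subst hij
    by_cases hi : p i <;> simp [hi]
  · simp [blockDiagonal'_apply_ne _ _ _ hij]

variable {d r : ℕ} {ni : Fin d → ℕ} {lam : Fin d → ℂ}

theorem Cmat_eq_conj (Q : Matrix ((i : Fin d) × Fin (ni i)) ((i : Fin d) × Fin (ni i)) ℂ) :
    Cmat d ni r lam Q = Q * blockDiagonal'
      (fun i : Fin d => if (i : ℕ) < r then jordanBlock (ni i) (lam i) else 0) * Q⁻¹ := by
  have hD := blockDiagonal'_ite_apply (fun i : Fin d => (i : ℕ) < r)
    fun i => jordanBlock (ni i) (lam i)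
  rw [← submatrix_val_mul_submatrix_val_mul_submatrix_val (p := fun x => (x.1 : ℕ) < r) Q _ Q⁻¹
    (fun x y hx => by simp [hD, hx]) (fun x y hy => by simp [hD, hy]), Cmat]
  congr 2
  ext x y
  simp [hD, x.2, y.2]

variable {A B : Matrix ((i : Fin d) × Fin (ni i)) ((i : Fin d) × Fin (ni i)) ℂ}
  (P Q : (Matrix ((i : Fin d) × Fin (ni i)) ((i : Fin d) × Fin (ni i)) ℂ)ˣ)

/-- The splitting given by the Weierstrass canonical form: its finite part is `Cmat`. -/
def weierstrassSplitting
    (hA : P * A * Q = blockDiagonal'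
      fun i : Fin d => if (i : ℕ) < r then jordanBlock (ni i) (lam i) else 1)
    (hB : P * B * Q = blockDiagonal'
      fun i : Fin d => if (i : ℕ) < r then 1 else jordanBlock (ni i) 0)
    {e : ℕ} (he : 1 ≤ e) (hni : ∀ i : Fin d, ¬ (i : ℕ) < r → ni i ≤ e) :
    PencilSplitting A B (Cmat d ni r lam Q) e :=
  ((PencilSplitting.ofCanonicalBlocks (fun i : Fin d => (i : ℕ) < r)
    (fun i => jordanBlock (ni i) (lam i)) (fun i => jordanBlock (ni i) 0) he
    fun i hi => jordanBlock_zero_pow_eq_zero (hni i hi)).map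
      (blockDiagonal'RingHom _ ℂ)).ofEquivalent P Q hA hB
        (by rw [Cmat_eq_conj, coe_units_inv]; rfl)

theorem isUnit_smul_sub_of_weierstrass
    (hA : P * A * Q = blockDiagonal'
      fun i : Fin d => if (i : ℕ) < r then jordanBlock (ni i) (lam i) else 1)
    (hB : P * B * Q = blockDiagonal'
      fun i : Fin d => if (i : ℕ) < r then 1 else jordanBlock (ni i) 0)
    {z : ℂ} (hz : ∀ i : Fin d, (i : ℕ) < r → z ≠ lam i) : IsUnit (z • B - A) := by
  refine isUnit_smul_sub_of_equivalent P Q hA hB ?_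
  rw [← blockDiagonal'_smul, ← blockDiagonal'_sub]
  refine IsUnit.map (blockDiagonal'RingHom _ ℂ) (Pi.isUnit_iff.mpr fun i => ?_)
  by_cases hi : (i : ℕ) < r
  · simpa [hi] using isUnit_smul_one_sub_jordanBlock (ni i) (hz i hi)
  · simpa [hi] using isUnit_smul_jordanBlock_zero_sub_one (ni i) z

end Weierstrass

/-- under the Weierstrass canonical form, the vanishing-moment
condition and `2M − 1 ≤ N − η`, the block Hankel matrices built from the moments
`μ̂_k = Ṽᴴ Ŝ_k` satisfy `Ĥ_M = S̃ᴴ Ŝ` and `Ĥ_M^< = S̃ᴴ C Ŝ`. -/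
theorem stmt_7 (N : ℕ) (z omega : Fin N → ℂ)
    (hvm : ∀ k : ℕ, k + 2 ≤ N → ∑ j, omega j * z j ^ k = 0)
    (d : ℕ) (ni : Fin d → ℕ) (hni : ∀ i, 1 ≤ ni i) (r : ℕ) (hr : r ≤ d)
    (lam : Fin d → ℂ)
    (A B Pt Q : Matrix ((i : Fin d) × Fin (ni i)) ((i : Fin d) × Fin (ni i)) ℂ)
    (hPt : IsUnit Pt) (hQ : IsUnit Q)
    (hA : Ptᴴ * A * Q = Matrix.blockDiagonal'
      (fun i : Fin d => if (i : ℕ) < r then jordanBlock (ni i) (lam i) else 1))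
    (hB : Ptᴴ * B * Q = Matrix.blockDiagonal'
      (fun i : Fin d => if (i : ℕ) < r then 1 else jordanBlock (ni i) 0))
    (hzlam : ∀ (j : Fin N) (i : Fin d), (i : ℕ) < r → z j ≠ lam i)
    (L : ℕ) (V Vt : Matrix ((i : Fin d) × Fin (ni i)) (Fin L) ℂ)
    (M : ℕ) (hM : 1 ≤ M)
    (hMN : 2 * M - 1 + ((Finset.univ.filter (fun i : Fin d => r ≤ (i : ℕ))).sup ni ⊔ 1) ≤ N) :
    (Matrix.of fun is jt : Fin M × Fin L =>
        (Vtᴴ * Shat z omega A B V ((is.1 : ℕ) + (jt.1 : ℕ))) is.2 jt.2) =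
      (StildeBig (Cmat d ni r lam Q) Vt M)ᴴ * ShatBig z omega A B V M ∧
    (Matrix.of fun is jt : Fin M × Fin L =>
        (Vtᴴ * Shat z omega A B V ((is.1 : ℕ) + (jt.1 : ℕ) + 1)) is.2 jt.2) =
      (StildeBig (Cmat d ni r lam Q) Vt M)ᴴ *
        (Cmat d ni r lam Q * ShatBig z omega A B V M) := by
  obtain ⟨P, hP⟩ := (isUnit_conjTranspose Pt).mpr hPt
  obtain ⟨Q, rfl⟩ := hQ
  rw [← hP] at hA hB
  have hsize (i : Fin d) (hi : ¬ (i : ℕ) < r) :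
      ni i ≤ (Finset.univ.filter (fun i : Fin d => r ≤ (i : ℕ))).sup ni ⊔ 1 :=
    le_sup_of_le_left (Finset.le_sup (f := ni) (by simpa using hi))
  exact stmt_7_general (weierstrassSplitting P Q hA hB le_sup_right hsize) hvm
    (fun j => isUnit_smul_sub_of_weierstrass P Q hA hB (hzlam j)) V Vt (by omega)
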